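/- For all t, x, y > 0 with xy ≤ t and y² ≥ 4t, the partial derivative of p in the second variable satisfies (1/12)·x·(y/t)²·p(t,x,y) ≤ ∂p/∂x (t,x,y) ≤ 2·x·(y/t)²·p(t,x,y). -/

import Mathlib

open Real MeasureTheory

/-- Modified Bessel function of the first kind, order 0. -/
noncomputable def I0 (z : ℝ) : ℝ := ∑' n : ℕ, (z/2)^(2*n) / ((n.factorial : ℝ))^2

/-- Modified Bessel function of the first kind, order 1. -/
noncomputable def I1 (z : ℝ) : ℝ :=
  ∑' n : ℕ, (z/2)^(2*n+1) / ((n.factorial : ℝ) * ((n+1).factorial : ℝ))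

/-- Heat kernel of the Bessel operator `d²/dx² + (1/x) d/dx` on `(0,∞)`
with respect to the measure `y dy`. -/
noncomputable def pk (t x y : ℝ) : ℝ :=
  t⁻¹ * Real.exp (-(x^2 + y^2)/(2*t)) * I0 (x*y/t)

/-- The function `h` from (AC): Dirichlet heat kernel of `(1/2) d²/dx²` on `(1,∞)`
multiplied by `(xy)⁻¹`. -/
noncomputable def hker (t x y : ℝ) : ℝ :=
  (2*Real.pi*t)^(-(1:ℝ)/2) * (x*y)⁻¹ *
    (Real.exp (-(x-y)^2/(2*t)) - Real.exp (-(x+y-2)^2/(2*t)))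

/-!
Comparing power series term by term gives `z/2 ≤ I₁(z) ≤ (z/2) I₀(z)` and
`I₀(z) ≤ 1 + (z/2) I₁(z)` for `z ≥ 0`. Multiplying the last bound by `z/2` and using `z/2 ≤ I₁(z)`
yields `2z/(4+z²) ≤ I₁(z)/I₀(z) ≤ z/2`. As `I₀' = I₁`, the logarithmic derivative of the heat
kernel in `x` is `(y/t) I₁(z)/I₀(z) - x/t` with `z = xy/t`, so it lies between
`2/(4+z²) x(y/t)² - x/t` and `(1/2) x(y/t)² - x/t`. If `z² ≤ 2` and `y² ≥ 4t`, then
`x/t ≤ (1/4) x(y/t)²`, and the lower coefficient is at least `2/6 - 1/4 = 1/12`.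
-/

lemma summable_I0_terms (z : ℝ) :
    Summable fun n : ℕ => (z / 2) ^ (2 * n) / (n.factorial : ℝ) ^ 2 := by
  refine .of_nonneg_of_le (fun n => by rw [pow_mul]; positivity) (fun n => ?_)
    (Real.summable_pow_div_factorial ((z / 2) ^ 2))
  rw [← pow_mul]
  have one_le_factorial : (1 : ℝ) ≤ n.factorial := mod_cast n.factorial_pos
  gcongr
  · exact (even_two_mul n).pow_nonneg _
  · exact le_self_pow₀ one_le_factorial two_ne_zero

lemma sq_factorial_le_factorial_mul_factorial_succ (n : ℕ) :
    (n.factorial : ℝ) ^ 2 ≤ n.factorial * (n + 1).factorial := by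
  rw [sq]
  gcongr
  exact n.le_succ

lemma summable_I1_terms (z : ℝ) :
    Summable fun n : ℕ => (z / 2) ^ (2 * n + 1) / ((n.factorial : ℝ) * (n + 1).factorial) := by
  have even_part :
      Summable fun n : ℕ => (z / 2) ^ (2 * n) / ((n.factorial : ℝ) * (n + 1).factorial) := by
    refine .of_nonneg_of_le (fun n => by rw [pow_mul]; positivity) (fun n => ?_)
      (summable_I0_terms z)
    gcongr
    · exact (even_two_mul n).pow_nonneg _
    · exact sq_factorial_le_factorial_mul_factorial_succ n
  simpa only [pow_succ', mul_div_assoc] using even_part.mul_left (z / 2)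

lemma one_le_I0 (z : ℝ) : 1 ≤ I0 z := by
  simpa [I0] using (summable_I0_terms z).le_tsum 0 fun n _ => by rw [pow_mul]; positivity

lemma I0_pos (z : ℝ) : 0 < I0 z :=
  zero_lt_one.trans_le (one_le_I0 z)

lemma half_le_I1 {z : ℝ} (hz : 0 ≤ z) : z / 2 ≤ I1 z := by
  simpa [I1] using (summable_I1_terms z).le_tsum 0 fun n _ => by positivity

lemma I1_le_half_mul_I0 {z : ℝ} (hz : 0 ≤ z) : I1 z ≤ z / 2 * I0 z := by
  unfold I1 I0
  rw [← tsum_mul_left]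
  refine (summable_I1_terms z).tsum_le_tsum (fun n => ?_) ((summable_I0_terms z).mul_left (z / 2))
  rw [← mul_div_assoc, ← pow_succ']
  gcongr
  exact sq_factorial_le_factorial_mul_factorial_succ n

lemma I0_le_one_add_half_mul_I1 (z : ℝ) : I0 z ≤ 1 + z / 2 * I1 z := by
  have I0_eq : I0 z = 1 + ∑' n : ℕ, (z / 2) ^ (2 * (n + 1)) / ((n + 1).factorial : ℝ) ^ 2 := by
    simpa [I0] using (summable_I0_terms z).tsum_eq_zero_add
  rw [I0_eq, I1, ← tsum_mul_left]
  gcongr with n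
  · exact (summable_nat_add_iff 1).mpr (summable_I0_terms z)
  · exact (summable_I1_terms z).mul_left (z / 2)
  · rw [← mul_div_assoc, ← pow_succ', sq ((n + 1).factorial : ℝ),
      show 2 * n + 1 + 1 = 2 * (n + 1) by ring]
    gcongr
    · exact (even_two_mul (n + 1)).pow_nonneg _
    · exact n.le_succ

lemma I1_div_I0_le_half {z : ℝ} (hz : 0 ≤ z) : I1 z / I0 z ≤ z / 2 :=
  (div_le_iff₀ (I0_pos z)).mpr (I1_le_half_mul_I0 hz)

lemma two_mul_div_four_add_sq_le_I1_div_I0 {z : ℝ} (hz : 0 ≤ z) :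
    2 * z / (4 + z ^ 2) ≤ I1 z / I0 z := by
  have half_mul_I0_le : z / 2 * I0 z ≤ (1 + (z / 2) ^ 2) * I1 z :=
    calc z / 2 * I0 z ≤ z / 2 * (1 + z / 2 * I1 z) := by
          gcongr; exact I0_le_one_add_half_mul_I1 z
      _ = z / 2 + (z / 2) ^ 2 * I1 z := by ring
      _ ≤ I1 z + (z / 2) ^ 2 * I1 z := by gcongr; exact half_le_I1 hz
      _ = (1 + (z / 2) ^ 2) * I1 z := by ring
  rw [div_le_div_iff₀ (by positivity) (I0_pos z)]
  linarith

lemma hasSum_deriv_I0_terms (z : ℝ) :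
    HasSum (fun n : ℕ => n * (z / 2) ^ (2 * n - 1) / (n.factorial : ℝ) ^ 2) (I1 z) := by
  have shifted_term (n : ℕ) :
      ((n + 1 : ℕ) : ℝ) * (z / 2) ^ (2 * (n + 1) - 1) / ((n + 1).factorial : ℝ) ^ 2 =
        (z / 2) ^ (2 * n + 1) / ((n.factorial : ℝ) * (n + 1).factorial) := by
    rw [show 2 * (n + 1) - 1 = 2 * n + 1 by lia, Nat.factorial_succ]
    push_cast
    field_simp
  rw [← hasSum_nat_add_iff' 1]
  simpa only [shifted_term, I1, Finset.sum_range_one, Nat.cast_zero, zero_mul, zero_div, sub_zero]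
    using (summable_I1_terms z).hasSum

lemma hasDerivAt_I0 (z : ℝ) : HasDerivAt I0 (I1 z) z := by
  set R := |z| + 1
  have hasDerivAt_term (n : ℕ) (w : ℝ) :
      HasDerivAt (fun w : ℝ => (w / 2) ^ (2 * n) / (n.factorial : ℝ) ^ 2)
        (n * (w / 2) ^ (2 * n - 1) / (n.factorial : ℝ) ^ 2) w := by
    refine ((((hasDerivAt_id w).div_const 2).pow (2 * n)).div_const _).congr_deriv ?_
    push_cast
    simp only [id]
    ring
  have norm_deriv_term_le (n : ℕ) (w : ℝ) (hw : w ∈ Metric.ball (0 : ℝ) R) :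
      ‖n * (w / 2) ^ (2 * n - 1) / (n.factorial : ℝ) ^ 2‖ ≤
        n * (R / 2) ^ (2 * n - 1) / (n.factorial : ℝ) ^ 2 := by
    simp only [norm_div, norm_mul, norm_pow, RCLike.norm_natCast, Real.norm_ofNat]
    gcongr
    exact (mem_ball_zero_iff.mp hw).le
  have z_mem_ball : z ∈ Metric.ball (0 : ℝ) R := mem_ball_zero_iff.mpr (lt_add_one |z|)
  rw [← (hasSum_deriv_I0_terms z).tsum_eq]
  exact hasDerivAt_tsum_of_isPreconnected (hasSum_deriv_I0_terms R).summable Metric.isOpen_ball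
    (convex_ball _ _).isPreconnected (fun n w _ => hasDerivAt_term n w) norm_deriv_term_le
    z_mem_ball (summable_I0_terms z) z_mem_ball

lemma hasDerivAt_pk (t x y : ℝ) :
    HasDerivAt (fun u : ℝ => pk t u y)
      ((y / t * (I1 (x * y / t) / I0 (x * y / t)) - x / t) * pk t x y) x := by
  have hasDerivAt_arg : HasDerivAt (fun u : ℝ => u * y / t) (y / t) x := by
    simpa using ((hasDerivAt_id x).mul_const y).div_const t
  have hasDerivAt_exponent : HasDerivAt (fun u : ℝ => -(u ^ 2 + y ^ 2) / (2 * t)) (-x / t) x := by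
    refine ((((hasDerivAt_pow 2 x).add_const (y ^ 2)).neg).div_const (2 * t)).congr_deriv ?_
    push_cast
    ring
  have hasDerivAt_I0_arg := (hasDerivAt_I0 (x * y / t)).comp x hasDerivAt_arg
  refine ((hasDerivAt_exponent.exp.const_mul t⁻¹).mul hasDerivAt_I0_arg).congr_deriv ?_
  have I0_ne_zero : I0 (x * y / t) ≠ 0 := (I0_pos _).ne'
  unfold pk
  simp only [Function.comp]
  field_simp
  ring

lemma pk_nonneg {t : ℝ} (ht : 0 ≤ t) (x y : ℝ) : 0 ≤ pk t x y := by
  have := I0_pos (x * y / t)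
  unfold pk
  positivity

lemma div_le_quarter_mul_sq_div {t x y : ℝ} (ht : 0 < t) (hx : 0 ≤ x) (hyt : 4 * t ≤ y ^ 2) :
    x / t ≤ 1 / 4 * x * (y / t) ^ 2 :=
  calc x / t = 1 / 4 * x * (4 * t / t ^ 2) := by field_simp
    _ ≤ 1 / 4 * x * (y ^ 2 / t ^ 2) := by gcongr
    _ = 1 / 4 * x * (y / t) ^ 2 := by rw [div_pow]

lemma twelfth_mul_sq_div_le_sub_div {t x y : ℝ} (ht : 0 < t) (hx : 0 ≤ x)
    (hz : (x * y / t) ^ 2 ≤ 2) (hyt : 4 * t ≤ y ^ 2) :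
    1 / 12 * x * (y / t) ^ 2 ≤ 2 / (4 + (x * y / t) ^ 2) * x * (y / t) ^ 2 - x / t :=
  calc 1 / 12 * x * (y / t) ^ 2
      = 2 / (4 + 2) * x * (y / t) ^ 2 - 1 / 4 * x * (y / t) ^ 2 := by ring
    _ ≤ 2 / (4 + (x * y / t) ^ 2) * x * (y / t) ^ 2 - x / t := by
        gcongr
        exact div_le_quarter_mul_sq_div ht hx hyt

theorem bessel_heat_kernel_derivative_estimate_general {t x y : ℝ}
    (ht : 0 < t) (hx : 0 ≤ x) (hy : 0 ≤ y) :
    (2 / (4 + (x * y / t) ^ 2) * x * (y / t) ^ 2 - x / t) * pk t x y ≤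
        deriv (fun u : ℝ => pk t u y) x ∧
      deriv (fun u : ℝ => pk t u y) x ≤ (1 / 2 * x * (y / t) ^ 2 - x / t) * pk t x y := by
  have hz : 0 ≤ x * y / t := by positivity
  have lower : 2 / (4 + (x * y / t) ^ 2) * x * (y / t) ^ 2 ≤
      y / t * (I1 (x * y / t) / I0 (x * y / t)) :=
    calc 2 / (4 + (x * y / t) ^ 2) * x * (y / t) ^ 2
        = y / t * (2 * (x * y / t) / (4 + (x * y / t) ^ 2)) := by ring
      _ ≤ y / t * (I1 (x * y / t) / I0 (x * y / t)) :=
        mul_le_mul_of_nonneg_left (two_mul_div_four_add_sq_le_I1_div_I0 hz) (by positivity)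
  have upper : y / t * (I1 (x * y / t) / I0 (x * y / t)) ≤ 1 / 2 * x * (y / t) ^ 2 :=
    calc y / t * (I1 (x * y / t) / I0 (x * y / t))
        ≤ y / t * (x * y / t / 2) :=
          mul_le_mul_of_nonneg_left (I1_div_I0_le_half hz) (by positivity)
      _ = 1 / 2 * x * (y / t) ^ 2 := by ring
  have kernel_nonneg := pk_nonneg ht.le x y
  rw [(hasDerivAt_pk t x y).deriv]
  exact ⟨mul_le_mul_of_nonneg_right (sub_le_sub_right lower _) kernel_nonneg,
    mul_le_mul_of_nonneg_right (sub_le_sub_right upper _) kernel_nonneg⟩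

theorem bessel_heat_kernel_derivative_estimate :
    ∀ t x y : ℝ, 0 < t → 0 < x → 0 < y → x*y ≤ t → 4*t ≤ y^2 →
      (1/12) * x * (y/t)^2 * pk t x y ≤ deriv (fun u : ℝ => pk t u y) x ∧
      deriv (fun u : ℝ => pk t u y) x ≤ 2 * x * (y/t)^2 * pk t x y := by
  intro t x y ht hx hy hxy hyt
  obtain ⟨lower, upper⟩ := bessel_heat_kernel_derivative_estimate_general ht hx.le hy.le
  have kernel_nonneg := pk_nonneg ht.le x y
  have z_sq_le_two : (x * y / t) ^ 2 ≤ 2 :=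
    (pow_le_one₀ (by positivity) ((div_le_one ht).mpr hxy)).trans one_le_two
  have upper_coefficient_le : 1 / 2 * x * (y / t) ^ 2 - x / t ≤ 2 * x * (y / t) ^ 2 :=
    (sub_le_self _ (by positivity)).trans (by gcongr; norm_num)
  exact ⟨(mul_le_mul_of_nonneg_right
      (twelfth_mul_sq_div_le_sub_div ht hx.le z_sq_le_two hyt) kernel_nonneg).trans lower,
    upper.trans (mul_le_mul_of_nonneg_right upper_coefficient_le kernel_nonneg)⟩
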